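/- The commutator subgroup VL_2' of the virtual triplet group VL_2 is infinite cyclic, generated by the element (ρ_1 y_1)². -/

import Mathlib

/-!
`VL 2` is the infinite dihedral group `⟨y, ρ | y² = ρ² = 1⟩`: the relations between different
indices are vacuous for `n = 2`. Put `z = (ρ y)²`, which equals the commutator `⁅ρ, y⁆` since `ρ` and
`y` are involutions. Conjugation by either generator inverts `z`, so `⟨z⟩` is normal
(`normal_zpowers_vlz`), and modulo `⟨z⟩` the two generators commute; hence `⟨z⟩` is the whole
commutator subgroup (`commutator_VL_two`). That `z` has infinite order is seen in
`DihedralGroup 0`, where `y` and `ρ` map to adjacent reflections and `z` to the rotation `r (-2)`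
(`zpow_vlz_injective`).
-/

open FreeGroup

/-- Generators of the virtual triplet group `VL n`: `Sum.inl i` is `y_{i+1}`,
`Sum.inr i` is `ρ_{i+1}`. -/
abbrev VLGen (n : ℕ) := Fin (n - 1) ⊕ Fin (n - 1)

def fY {n : ℕ} (i : Fin (n - 1)) : FreeGroup (VLGen n) := FreeGroup.of (Sum.inl i)
def fP {n : ℕ} (i : Fin (n - 1)) : FreeGroup (VLGen n) := FreeGroup.of (Sum.inr i)

/-- Defining relators of the virtual triplet group `VL n` (indices are 0-based: index `i`
corresponds to the generator with subscript `i+1`). -/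
def vlRels (n : ℕ) : Set (FreeGroup (VLGen n)) :=
  {r | (∃ i, r = fY i ^ 2) ∨ (∃ i, r = fP i ^ 2) ∨
    (∃ i j : Fin (n - 1), (i : ℕ) + 2 ≤ (j : ℕ) ∧ r = fP i * fP j * (fP i)⁻¹ * (fP j)⁻¹) ∨
    (∃ i j : Fin (n - 1), ((i : ℕ) + 2 ≤ (j : ℕ) ∨ (j : ℕ) + 2 ≤ (i : ℕ)) ∧
      r = fY i * fP j * (fY i)⁻¹ * (fP j)⁻¹) ∨
    (∃ i j : Fin (n - 1), (j : ℕ) = (i : ℕ) + 1 ∧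
      r = fY i * fY j * fY i * (fY j * fY i * fY j)⁻¹) ∨
    (∃ i j : Fin (n - 1), (j : ℕ) = (i : ℕ) + 1 ∧
      r = fP i * fP j * fP i * (fP j * fP i * fP j)⁻¹) ∨
    (∃ i j : Fin (n - 1), (j : ℕ) = (i : ℕ) + 1 ∧
      r = fP i * fY j * fP i * (fP j * fY i * fP j)⁻¹)}

/-- The virtual triplet group `VL n`. -/
abbrev VL (n : ℕ) := PresentedGroup (vlRels n)

/-- The generator `y_{i+1}` of `VL n`. -/
def yG {n : ℕ} (i : Fin (n - 1)) : VL n := PresentedGroup.of (Sum.inl i)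
/-- The generator `ρ_{i+1}` of `VL n`. -/
def pG {n : ℕ} (i : Fin (n - 1)) : VL n := PresentedGroup.of (Sum.inr i)

open scoped commutatorElement

/-- The element `(ρ₁ y₁)²` of `VL 2`. -/
def vlz : VL 2 := (pG 0 * yG 0) ^ 2

lemma yG_mul_self : (yG 0 : VL 2) * yG 0 = 1 := by
  rw [← pow_two]
  exact PresentedGroup.one_of_mem (rels := vlRels 2) (x := fY 0 ^ 2) (Or.inl ⟨0, rfl⟩)

lemma pG_mul_self : (pG 0 : VL 2) * pG 0 = 1 := by
  rw [← pow_two]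
  exact PresentedGroup.one_of_mem (rels := vlRels 2) (x := fP 0 ^ 2) (Or.inr (Or.inl ⟨0, rfl⟩))

lemma yG_inv : (yG 0 : VL 2)⁻¹ = yG 0 := inv_eq_of_mul_eq_one_left yG_mul_self

lemma pG_inv : (pG 0 : VL 2)⁻¹ = pG 0 := inv_eq_of_mul_eq_one_left pG_mul_self

lemma vlz_eq_commutator : vlz = ⁅(pG 0 : VL 2), yG 0⁆ := by
  rw [commutatorElement_def, yG_inv, pG_inv, vlz, pow_two, mul_assoc, mul_assoc, mul_assoc]

lemma range_of_VL_two :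
    Set.range (PresentedGroup.of : VLGen 2 → VL 2) = {yG 0, pG 0} := by
  ext x
  constructor
  · rintro ⟨i | i, rfl⟩
    · obtain rfl : i = 0 := Fin.ext (by omega)
      exact Or.inl rfl
    · obtain rfl : i = 0 := Fin.ext (by omega)
      exact Or.inr rfl
  · rintro (rfl | rfl)
    · exact ⟨Sum.inl 0, rfl⟩
    · exact ⟨Sum.inr 0, rfl⟩

lemma mem_closure_gens (g : VL 2) : g ∈ Subgroup.closure ({yG 0, pG 0} : Set (VL 2)) := by
  rw [← range_of_VL_two, PresentedGroup.closure_range_of]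
  exact Subgroup.mem_top g

lemma conj_vlz (g : VL 2) : g * vlz * g⁻¹ = vlz ∨ g * vlz * g⁻¹ = vlz⁻¹ := by
  induction mem_closure_gens g using Subgroup.closure_induction with
  | mem x hx =>
    right
    have hinv : vlz⁻¹ = yG 0 * pG 0 * (yG 0 * pG 0) := by
      rw [vlz, pow_two, mul_inv_rev, mul_inv_rev, yG_inv, pG_inv]
    rcases hx with rfl | rfl
    · rw [hinv, yG_inv, vlz, pow_two]
      simp only [mul_assoc, yG_mul_self, mul_one]
    · rw [hinv, pG_inv, vlz, pow_two]
      simp only [← mul_assoc, pG_mul_self, one_mul]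
  | one => left; simp
  | mul x y _ _ hx hy =>
    have e : x * y * vlz * (x * y)⁻¹ = x * (y * vlz * y⁻¹) * x⁻¹ := by group
    rw [e]
    rcases hy with hy | hy
    · rwa [hy]
    · rw [hy, ← conj_inv]
      rcases hx with hx | hx <;> rw [hx] <;> simp
  | inv x _ hx =>
    rcases hx with hx | hx
    · left
      nth_rw 1 [← hx]
      group
    · right
      -- `x z x⁻¹ = z⁻¹` gives `z = x z⁻¹ x⁻¹`
      have h : vlz = x * vlz⁻¹ * x⁻¹ := by rw [← conj_inv, hx, inv_inv]
      nth_rw 1 [h]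
      group

instance normal_zpowers_vlz : (Subgroup.zpowers vlz).Normal where
  conj_mem := by
    rintro _ ⟨k, rfl⟩ g
    change g * vlz ^ k * g⁻¹ ∈ _
    rw [← conj_zpow]
    apply Subgroup.zpow_mem
    rcases conj_vlz g with h | h <;> rw [h]
    · exact Subgroup.mem_zpowers _
    · exact Subgroup.inv_mem _ (Subgroup.mem_zpowers _)

/-- The generators commute modulo `⟨z⟩`, hence so do all elements. -/
lemma commute_mod_vlz (a b : VL 2) :
    Commute (a : VL 2 ⧸ Subgroup.zpowers vlz) (b : VL 2 ⧸ Subgroup.zpowers vlz) := by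
  have key : Commute ((pG 0 : VL 2) : VL 2 ⧸ Subgroup.zpowers vlz)
      ((yG 0 : VL 2) : VL 2 ⧸ Subgroup.zpowers vlz) := by
    rw [← commutatorElement_eq_one_iff_commute]
    change ((⁅(pG 0 : VL 2), (yG 0 : VL 2)⁆ : VL 2) : VL 2 ⧸ Subgroup.zpowers vlz) = 1
    rw [QuotientGroup.eq_one_iff, ← vlz_eq_commutator]
    exact Subgroup.mem_zpowers _
  induction mem_closure_gens a, mem_closure_gens b using Subgroup.closure_induction₂ with
  | mem x y hx hy =>
    rcases hx with rfl | rfl <;> rcases hy with rfl | rfl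
    · exact Commute.refl _
    · exact key.symm
    · exact key
    · exact Commute.refl _
  | one_left x _ => exact Commute.one_left _
  | one_right x _ => exact Commute.one_right _
  | mul_left x y w _ _ _ h₁ h₂ => exact h₁.mul_left h₂
  | mul_right x y w _ _ _ h₁ h₂ => exact h₁.mul_right h₂
  | inv_left x y _ _ h => exact h.inv_left
  | inv_right x y _ _ h => exact h.inv_right

lemma commutator_VL_two : commutator (VL 2) = Subgroup.zpowers vlz := by
  apply le_antisymm
  · rw [commutator_def, Subgroup.commutator_le]
    intro a _ b _
    rw [← QuotientGroup.eq_one_iff]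
    exact commutatorElement_eq_one_iff_commute.2 (commute_mod_vlz a b)
  · rw [Subgroup.zpowers_le, vlz_eq_commutator]
    exact Subgroup.commutator_mem_commutator (Subgroup.mem_top _) (Subgroup.mem_top _)

/-- The homomorphism to the infinite dihedral group sending `y₁` and `ρ₁` to adjacent
reflections. -/
def toDihedral : VL 2 →* DihedralGroup 0 :=
  PresentedGroup.toGroup (rels := vlRels 2)
    (f := Sum.elim (fun _ => DihedralGroup.sr 0) (fun _ => DihedralGroup.sr 1)) (by
      rintro r (⟨i, rfl⟩ | ⟨i, rfl⟩ | ⟨i, j, h, -⟩ | ⟨i, j, h, -⟩ | ⟨i, j, h, -⟩ | ⟨i, j, h, -⟩ |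
        ⟨i, j, h, -⟩)
      · simp [fY, pow_two]
      · simp [fP, pow_two]
      -- all other relators involve two distinct indices below `1`
      all_goals omega)

lemma toDihedral_vlz : toDihedral vlz = DihedralGroup.r (-2) := by
  have hy : toDihedral (yG 0) = DihedralGroup.sr 0 := PresentedGroup.toGroup.of _
  have hp : toDihedral (pG 0) = DihedralGroup.sr 1 := PresentedGroup.toGroup.of _
  have hyp : toDihedral (pG 0 * yG 0) = DihedralGroup.sr 1 * DihedralGroup.sr 0 := by
    rw [← hy, ← hp]
    exact map_mul _ _ _
  rw [vlz, map_pow, hyp]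
  rfl

lemma zpow_vlz_injective : Function.Injective fun k : ℤ => vlz ^ k := by
  intro k l h
  have h' := congrArg toDihedral h
  simp only [map_zpow, toDihedral_vlz, DihedralGroup.r_zpow, DihedralGroup.r.injEq] at h'
  have h'' : (-2 : ℤ) * k = -2 * l := h'
  omega

/-- The commutator subgroup of `VL 2` is infinite cyclic,
generated by `(ρ₁ y₁)²`. -/
theorem stmt9 :
    commutator (VL 2) = Subgroup.closure {(pG 0 * yG 0) ^ 2} ∧
      ¬ IsOfFinOrder ((pG 0 * yG 0) ^ 2 : VL 2) ∧
      Nonempty (↥(commutator (VL 2)) ≃* Multiplicative ℤ) := by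
  have hinj := zpow_vlz_injective
  refine ⟨?_, ?_, ⟨?_⟩⟩
  · rw [← Subgroup.zpowers_eq_closure]
    exact commutator_VL_two
  · exact injective_zpow_iff_not_isOfFinOrder.1 hinj
  · have hinj' : Function.Injective (zpowersHom (VL 2) vlz) := fun k l h => hinj h
    exact ((MonoidHom.ofInjective hinj').trans
      (MulEquiv.subgroupCongr commutator_VL_two.symm)).symm
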